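/- Let K(x,y) = ∫ e^{i(x−y)·t} dμ(t) and G(x,y) = ∫ e^{i(x−y)·t} dν(t) be continuous translation-invariant 𝓛(Λ)-valued kernels on ℝᵈ, with Lebesgue decompositions μ = μ_c + μ_s, ν = ν_c + ν_s and corresponding kernel decompositions K = K_c + K_s, G = G_c + G_s. Then H_K ⪯ H_G if and only if H_{K_c} ⪯ H_{G_c} and H_{K_s} ⪯ H_{G_s}. -/

import Mathlib

open MeasureTheory ContinuousLinearMap
open scoped ComplexOrder

noncomputable section

local notation "⟪" x ", " y "⟫" => @inner ℂ _ _ x y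

section Defs

variable {X : Type*} {Λ : Type*} [NormedAddCommGroup Λ] [InnerProductSpace ℂ Λ]

/-- Data exhibiting a Hilbert space `H`, embedded in the `Λ`-valued functions on `X` by `J`,
as the reproducing kernel Hilbert space of the operator-valued kernel `K`;
`kf x ξ` is the element representing `K(x,·)ξ`. -/
structure IsVRKHS (K : X → X → Λ →L[ℂ] Λ) (H : Type*) [NormedAddCommGroup H]
    [InnerProductSpace ℂ H] (J : H →ₗ[ℂ] (X → Λ)) (kf : X → Λ → H) : Prop where
  inj : Function.Injective J
  kfun_eq : ∀ (x : X) (ξ : Λ), J (kf x ξ) = fun y => K x y ξ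
  repro : ∀ (f : H) (x : X) (ξ : Λ), ⟪kf x ξ, f⟫ = ⟪ξ, J f x⟫

/-- Data exhibiting `H` as the RKHS of a scalar-valued kernel `k` on `Y`. -/
structure IsSRKHS {Y : Type*} (k : Y → Y → ℂ) (H : Type*) [NormedAddCommGroup H]
    [InnerProductSpace ℂ H] (J : H →ₗ[ℂ] (Y → ℂ)) (kf : Y → H) : Prop where
  inj : Function.Injective J
  kfun_eq : ∀ y : Y, J (kf y) = fun z => k y z
  repro : ∀ (f : H) (y : Y), ⟪kf y, f⟫ = J f y

/-- `H₁ ⪯ H₂` : every element of `H₁` is an element of `H₂` (as functions) with the same norm. -/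
def RKHSle {H₁ H₂ V : Type*} [NormedAddCommGroup H₁] [InnerProductSpace ℂ H₁]
    [NormedAddCommGroup H₂] [InnerProductSpace ℂ H₂] [AddCommGroup V] [Module ℂ V]
    (J₁ : H₁ →ₗ[ℂ] V) (J₂ : H₂ →ₗ[ℂ] V) : Prop :=
  ∀ f : H₁, ∃ g : H₂, J₂ g = J₁ f ∧ ‖g‖ = ‖f‖

/-- `K` is an `𝓛(Λ)`-valued reproducing kernel: hermitian and positive-definite. -/
def IsOpKernel [CompleteSpace Λ] (K : X → X → Λ →L[ℂ] Λ) : Prop :=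
  (∀ x y, K x y = ContinuousLinearMap.adjoint (K y x)) ∧
    ∀ (n : ℕ) (x : Fin n → X) (ξ : Fin n → Λ),
      0 ≤ ∑ j, ∑ k, ⟪ξ k, K (x j) (x k) (ξ j)⟫

/-- `k` is a scalar-valued reproducing kernel: hermitian and positive-definite. -/
def IsScalarKernel {Y : Type*} (k : Y → Y → ℂ) : Prop :=
  (∀ y z, k z y = starRingEnd ℂ (k y z)) ∧
    ∀ (n : ℕ) (y : Fin n → Y) (c : Fin n → ℂ),
      0 ≤ ∑ j, ∑ l, starRingEnd ℂ (c l) * c j * k (y j) (y l)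

/-- The relation `A ⪯ B` for positive operators. -/
def OpPrec (A B : Λ →L[ℂ] Λ) : Prop :=
  ∀ ξ : Λ, ∃ η : Λ, A ξ = B η ∧ ⟪ξ, A ξ⟫ = ⟪η, B η⟫

end Defs

/-! The absolutely continuous and the singular part cannot interact: a function that lies both in
`H_{K_c} + H_{G_c}` and in `H_{K_s} + H_{G_s}` has, against each `ξ`, the Fourier transform of
`F · (μ_c + ν_c)` and of `G · (μ_s + ν_s)` for some `F`, `G` in `L²`; by uniqueness of Fourier
transforms these two complex measures agree, and being mutually singular they vanish. So the RKHS
of `K` is the Hilbert direct sum of those of `K_c` and `K_s`, likewise for `G`, and an isometric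
inclusion of the sums splits along the summands. -/

section MomentProblem

variable {𝕜 ι H H' : Type*} [RCLike 𝕜] [NormedAddCommGroup H] [InnerProductSpace 𝕜 H]
  [NormedAddCommGroup H'] [InnerProductSpace 𝕜 H']

theorem exists_inner_eq_of_norm_linearCombination_le [CompleteSpace H] (w : ι → H) (a : ι → 𝕜)
    {C : ℝ} (hC : 0 ≤ C)
    (h : ∀ c : ι →₀ 𝕜,
      ‖Finsupp.linearCombination 𝕜 a c‖ ≤ C * ‖Finsupp.linearCombination 𝕜 w c‖) :
    ∃ g : H, ‖g‖ ≤ C ∧ ∀ i, inner 𝕜 g (w i) = a i := by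
  set A := Finsupp.linearCombination 𝕜 a
  set W := Finsupp.linearCombination 𝕜 w
  let φ : StrongDual 𝕜 (LinearMap.range W) := A.compLeftInverse W
  have hφ (c : ι →₀ 𝕜) : φ ⟨W c, c, rfl⟩ = A c :=
    LinearMap.compLeftInverse_apply_of_bdd _ _ ⟨C, h⟩ _ _ rfl
  obtain ⟨ψ, hψ, hψφ⟩ := exists_extension_norm_eq _ φ
  refine ⟨(InnerProductSpace.toDual 𝕜 H).symm ψ, ?_, fun i => ?_⟩
  · rw [LinearIsometryEquiv.norm_map, hψφ]
    refine φ.opNorm_le_bound hC ?_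
    rintro ⟨_, c, rfl⟩
    exact (hφ c).symm ▸ h c
  · have hw : W (Finsupp.single i 1) = w i := by simp [W]
    rw [InnerProductSpace.toDual_symm_apply, ← hw, hψ ⟨_, _, rfl⟩, hφ]
    simp [A]

theorem norm_linearCombination_eq_of_inner_eq {v : ι → H} {w : ι → H'}
    (h : ∀ i j, inner 𝕜 (v i) (v j) = inner 𝕜 (w i) (w j)) (c : ι →₀ 𝕜) :
    ‖Finsupp.linearCombination 𝕜 v c‖ = ‖Finsupp.linearCombination 𝕜 w c‖ := by
  simp only [norm_eq_sqrt_re_inner (𝕜 := 𝕜), Finsupp.linearCombination_apply, Finsupp.sum,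
    sum_inner, inner_sum, inner_smul_left, inner_smul_right, h]

theorem exists_inner_eq_of_inner_eq [CompleteSpace H'] {v : ι → H} {w : ι → H'}
    (h : ∀ i j, inner 𝕜 (v i) (v j) = inner 𝕜 (w i) (w j)) (f : H) :
    ∃ g : H', ‖g‖ ≤ ‖f‖ ∧ ∀ i, inner 𝕜 (w i) g = inner 𝕜 (v i) f := by
  obtain ⟨g, hg, hgw⟩ := exists_inner_eq_of_norm_linearCombination_le w
    (fun i => inner 𝕜 f (v i)) (norm_nonneg f) fun c => by
      have hsum : Finsupp.linearCombination 𝕜 (fun i => inner 𝕜 f (v i)) c =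
          inner 𝕜 f (Finsupp.linearCombination 𝕜 v c) := by
        simp only [Finsupp.linearCombination_apply, Finsupp.sum, inner_sum, inner_smul_right,
          smul_eq_mul]
      rw [hsum, ← norm_linearCombination_eq_of_inner_eq h]
      exact norm_inner_le_norm _ _
  exact ⟨g, hg, fun i => by rw [← inner_conj_symm, hgw, inner_conj_symm]⟩

end MomentProblem

section FourierUniqueness

open BoundedContinuousFunction

variable {E : Type*} [NormedAddCommGroup E] [InnerProductSpace ℝ E]

theorem innerProbChar_neg (x t : E) : innerProbChar (-x) t = starRingEnd ℂ (innerProbChar x t) := by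
  simp [innerProbChar_apply, ← Complex.exp_conj]

theorem innerProbChar_add (x y t : E) :
    innerProbChar (x + y) t = innerProbChar x t * innerProbChar y t := by
  simp [innerProbChar_apply, inner_add_right, add_mul, Complex.exp_add]

theorem norm_innerProbChar (x t : E) : ‖innerProbChar x t‖ = 1 := by
  rw [innerProbChar_apply, Complex.norm_exp_ofReal_mul_I]

variable [MeasurableSpace E] {μ ν : Measure E}

theorem charFun_withDensity_ofReal {u : E → ℝ} (hu : Integrable u μ) (x : E) :
    charFun (μ.withDensity fun t => ENNReal.ofReal (u t)) x =
      ∫ t, innerProbChar x t * (max (u t) 0 : ℝ) ∂μ := by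
  rw [charFun_eq_integral_innerProbChar, integral_withDensity_eq_integral_toReal_smul₀
    hu.1.aemeasurable.ennreal_ofReal (.of_forall fun _ => ENNReal.ofReal_lt_top)]
  simp only [ENNReal.toReal_ofReal', Complex.real_smul, mul_comm]

variable [BorelSpace E]

theorem integrable_innerProbChar_mul {u : E → ℂ} (hu : Integrable u μ) (x : E) :
    Integrable (fun t => innerProbChar x t * u t) μ :=
  hu.bdd_mul (innerProbChar x).continuous.aestronglyMeasurable
    (.of_forall fun t => (norm_innerProbChar x t).le)

theorem charFun_add_measure [IsFiniteMeasure μ] [IsFiniteMeasure ν] (x : E) :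
    charFun (μ + ν) x = charFun μ x + charFun ν x := by
  simp only [charFun_eq_integral_innerProbChar]
  exact integral_add_measure ((innerProbChar x).integrable μ) ((innerProbChar x).integrable ν)

theorem inner_toLp_innerProbChar [IsFiniteMeasure μ] (x : E) (F : Lp ℂ 2 μ) :
    ⟪BoundedContinuousFunction.toLp 2 μ ℂ (innerProbChar x), F⟫ =
      ∫ t, innerProbChar (-x) t * F t ∂μ := by
  rw [L2.inner_def]
  refine integral_congr_ae ?_
  filter_upwards [coeFn_toLp (p := 2) (𝕜 := ℂ) μ (innerProbChar x)] with t ht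
  rw [ht, RCLike.inner_apply, innerProbChar_neg, mul_comm]

theorem inner_toLp_innerProbChar_innerProbChar [IsFiniteMeasure μ] (x y : E) :
    ⟪BoundedContinuousFunction.toLp 2 μ ℂ (innerProbChar x),
      BoundedContinuousFunction.toLp 2 μ ℂ (innerProbChar y)⟫ = charFun μ (y - x) := by
  rw [inner_toLp_innerProbChar, charFun_eq_integral_innerProbChar]
  refine integral_congr_ae ?_
  filter_upwards [coeFn_toLp (p := 2) (𝕜 := ℂ) μ (innerProbChar y)] with t ht
  rw [ht, ← innerProbChar_add, neg_add_eq_sub]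

theorem exists_inner_eq_integral_of_inner_eq_charFun [IsFiniteMeasure μ] {H : Type*}
    [NormedAddCommGroup H] [InnerProductSpace ℂ H] {v : E → H}
    (hv : ∀ x y, ⟪v x, v y⟫ = charFun μ (y - x)) (f : H) :
    ∃ F : E → ℂ, Integrable F μ ∧ ∀ x, ⟪v x, f⟫ = ∫ t, innerProbChar (-x) t * F t ∂μ := by
  obtain ⟨F, -, hF⟩ := exists_inner_eq_of_inner_eq (𝕜 := ℂ)
    (w := fun x => BoundedContinuousFunction.toLp 2 μ ℂ (innerProbChar x))
    (fun x y => by rw [hv, inner_toLp_innerProbChar_innerProbChar]) f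
  exact ⟨F, (Lp.memLp F).integrable one_le_two,
    fun x => by rw [← hF, inner_toLp_innerProbChar]⟩

variable [SecondCountableTopology E] [CompleteSpace E]

theorem ae_eq_zero_of_integral_innerProbChar_mul_ofReal_eq_zero {u : E → ℝ} (hu : Integrable u μ)
    (h : ∀ x : E, ∫ t, innerProbChar x t * (u t : ℂ) ∂μ = 0) : u =ᵐ[μ] 0 := by
  have := isFiniteMeasure_withDensity_ofReal hu.2
  have := isFiniteMeasure_withDensity_ofReal hu.neg.2
  have hpos_eq_neg : (μ.withDensity fun t => ENNReal.ofReal (u t)) =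
      μ.withDensity fun t => ENNReal.ofReal ((-u) t) := by
    refine Measure.ext_of_charFun (funext fun x => ?_)
    have h_integrable {w : E → ℝ} (hw : Integrable w μ) :
        Integrable (fun t => innerProbChar x t * ((max (w t) 0 : ℝ) : ℂ)) μ :=
      integrable_innerProbChar_mul hw.pos_part.ofReal x
    rw [charFun_withDensity_ofReal hu, charFun_withDensity_ofReal hu.neg, ← sub_eq_zero,
      ← integral_sub (h_integrable hu) (h_integrable hu.neg), ← h x]
    congr 1 with t
    rw [← mul_sub, ← Complex.ofReal_sub, Pi.neg_apply, max_zero_sub_max_neg_zero_eq_self]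
  rw [withDensity_eq_iff hu.1.aemeasurable.ennreal_ofReal hu.neg.1.aemeasurable.ennreal_ofReal
    hu.lintegral_lt_top.ne] at hpos_eq_neg
  filter_upwards [hpos_eq_neg] with t ht
  rcases le_total (u t) 0 with hle | hle
  · exact hle.antisymm (by simpa [ENNReal.ofReal_of_nonpos hle] using ht.symm)
  · exact hle.antisymm' (by simpa [ENNReal.ofReal_of_nonpos (neg_nonpos.2 hle)] using ht)

theorem re_ae_eq_zero_of_integral_innerProbChar_mul_eq_zero {u : E → ℂ} (hu : Integrable u μ)
    (h : ∀ x : E, ∫ t, innerProbChar x t * u t ∂μ = 0) : (fun t => (u t).re) =ᵐ[μ] 0 := by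
  have h_conj (x : E) : ∫ t, innerProbChar x t * starRingEnd ℂ (u t) ∂μ = 0 := by
    rw [← map_zero (starRingEnd ℂ), ← h (-x), ← integral_conj]
    simp only [map_mul, innerProbChar_neg, Complex.conj_conj]
  have hu_conj : Integrable (fun t => starRingEnd ℂ (u t)) μ :=
    Complex.conjCLE.toContinuousLinearMap.integrable_comp hu
  refine ae_eq_zero_of_integral_innerProbChar_mul_ofReal_eq_zero hu.re fun x => ?_
  calc ∫ t, innerProbChar x t * ((u t).re : ℂ) ∂μ
      = ∫ t, (innerProbChar x t * u t + innerProbChar x t * starRingEnd ℂ (u t)) / 2 ∂μ := by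
        simp only [Complex.re_eq_add_conj, ← mul_add, mul_div_assoc]
    _ = 0 := by
        rw [integral_div, integral_add (integrable_innerProbChar_mul hu x)
          (integrable_innerProbChar_mul hu_conj x), h, h_conj, add_zero, zero_div]

theorem ae_eq_zero_of_integral_innerProbChar_mul_eq_zero {u : E → ℂ} (hu : Integrable u μ)
    (h : ∀ x : E, ∫ t, innerProbChar x t * u t ∂μ = 0) : u =ᵐ[μ] 0 := by
  have h_im := re_ae_eq_zero_of_integral_innerProbChar_mul_eq_zero (hu.const_mul (-Complex.I))
    fun x => by
      simp only [mul_left_comm _ (-Complex.I), integral_const_mul, h, mul_zero]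
  filter_upwards [re_ae_eq_zero_of_integral_innerProbChar_mul_eq_zero hu h, h_im] with t hre him
  exact Complex.ext hre (by simpa using him)

theorem ae_eq_zero_of_mutuallySingular_of_integral_innerProbChar_mul_eq (hμν : μ ⟂ₘ ν)
    {F G : E → ℂ} (hF : Integrable F μ) (hG : Integrable G ν)
    (h : ∀ x : E, ∫ t, innerProbChar x t * F t ∂μ = ∫ t, innerProbChar x t * G t ∂ν) :
    F =ᵐ[μ] 0 := by
  classical
  obtain ⟨s, -, hμs, hνs⟩ := hμν
  let u : E → ℂ := s.piecewise (-G) F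
  have huF : u =ᵐ[μ] F := by
    filter_upwards [measure_eq_zero_iff_ae_notMem.1 hμs] with t ht
    exact Set.piecewise_eq_of_notMem _ _ _ ht
  have huG : u =ᵐ[ν] -G := by
    filter_upwards [measure_eq_zero_iff_ae_notMem.1 hνs] with t ht
    exact Set.piecewise_eq_of_mem _ _ _ (not_not.1 ht)
  have hu : Integrable u (μ + ν) :=
    (hF.congr huF.symm).add_measure (hG.neg.congr huG.symm)
  have hu_zero : u =ᵐ[μ + ν] 0 := by
    refine ae_eq_zero_of_integral_innerProbChar_mul_eq_zero hu fun x => ?_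
    have hxu := integrable_innerProbChar_mul hu x
    rw [integral_add_measure hxu.left_of_add_measure hxu.right_of_add_measure,
      integral_congr_ae (huF.mono fun t ht => congrArg (innerProbChar x t * ·) ht),
      integral_congr_ae (huG.mono fun t ht => congrArg (innerProbChar x t * ·) ht), h]
    simp only [Pi.neg_apply, mul_neg, integral_neg, add_neg_cancel]
  exact huF.symm.trans (ae_add_measure_iff.1 hu_zero).1

theorem inner_eq_zero_of_mutuallySingular [IsFiniteMeasure μ] [IsFiniteMeasure ν] (hμν : μ ⟂ₘ ν)
    {H H' : Type*} [NormedAddCommGroup H] [InnerProductSpace ℂ H] [NormedAddCommGroup H']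
    [InnerProductSpace ℂ H'] {v : E → H} {w : E → H'}
    (hv : ∀ x y, ⟪v x, v y⟫ = charFun μ (y - x)) (hw : ∀ x y, ⟪w x, w y⟫ = charFun ν (y - x))
    {f : H} {g : H'} (hfg : ∀ x, ⟪v x, f⟫ = ⟪w x, g⟫) (x : E) : ⟪v x, f⟫ = 0 := by
  obtain ⟨F, hF, hvF⟩ := exists_inner_eq_integral_of_inner_eq_charFun hv f
  obtain ⟨G, hG, hwG⟩ := exists_inner_eq_integral_of_inner_eq_charFun hw g
  have hF_zero : F =ᵐ[μ] 0 :=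
    ae_eq_zero_of_mutuallySingular_of_integral_innerProbChar_mul_eq hμν hF hG fun y => by
      rw [← neg_neg y, ← hvF, ← hwG, hfg]
  rw [hvF]
  exact integral_eq_zero_of_ae (hF_zero.mono fun t ht => by simp [ht])

end FourierUniqueness

section DirectSum

variable {V H₁ H₂ G₁ G₂ : Type*} [AddCommGroup V] [Module ℂ V]
  [NormedAddCommGroup H₁] [InnerProductSpace ℂ H₁] [NormedAddCommGroup H₂] [InnerProductSpace ℂ H₂]
  [NormedAddCommGroup G₁] [InnerProductSpace ℂ G₁] [NormedAddCommGroup G₂] [InnerProductSpace ℂ G₂]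

/-- The map `(f₁, f₂) ↦ J₁ f₁ + J₂ f₂` on the Hilbert space direct sum of `H₁` and `H₂`: the
candidate for the inclusion of the RKHS of a sum of two kernels. -/
def l2Coprod (J₁ : H₁ →ₗ[ℂ] V) (J₂ : H₂ →ₗ[ℂ] V) : WithLp 2 (H₁ × H₂) →ₗ[ℂ] V :=
  J₁.coprod J₂ ∘ₗ (WithLp.linearEquiv 2 ℂ (H₁ × H₂)).toLinearMap

variable {J₁ : H₁ →ₗ[ℂ] V} {J₂ : H₂ →ₗ[ℂ] V} {L₁ : G₁ →ₗ[ℂ] V} {L₂ : G₂ →ₗ[ℂ] V}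

theorem l2Coprod_apply (p : WithLp 2 (H₁ × H₂)) : l2Coprod J₁ J₂ p = J₁ p.fst + J₂ p.snd := rfl

theorem range_l2Coprod :
    LinearMap.range (l2Coprod J₁ J₂) = LinearMap.range J₁ ⊔ LinearMap.range J₂ := by
  rw [l2Coprod, LinearEquiv.range_comp, LinearMap.range_coprod]

theorem l2Coprod_injective (h₁ : Function.Injective J₁) (h₂ : Function.Injective J₂)
    (h : Disjoint (LinearMap.range J₁) (LinearMap.range J₂)) :
    Function.Injective (l2Coprod J₁ J₂) := by
  have hcoprod : Function.Injective (J₁.coprod J₂) := by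
    rw [← LinearMap.ker_eq_bot, LinearMap.ker_coprod_of_disjoint_range _ _ h,
      LinearMap.ker_eq_bot.2 h₁, LinearMap.ker_eq_bot.2 h₂, Submodule.prod_bot]
  exact hcoprod.comp (WithLp.linearEquiv 2 ℂ (H₁ × H₂)).injective

theorem RKHSle.trans {J : H₁ →ₗ[ℂ] V} {J' : H₂ →ₗ[ℂ] V} {J'' : G₁ →ₗ[ℂ] V} (h : RKHSle J J')
    (h' : RKHSle J' J'') : RKHSle J J'' := by
  intro f
  obtain ⟨g, hgf, hg⟩ := h f
  obtain ⟨k, hkg, hk⟩ := h' g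
  exact ⟨k, hkg.trans hgf, hk.trans hg⟩

theorem RKHSle.l2Coprod (h₁ : RKHSle J₁ L₁) (h₂ : RKHSle J₂ L₂) :
    RKHSle (l2Coprod J₁ J₂) (l2Coprod L₁ L₂) := by
  intro f
  obtain ⟨g₁, hg₁, hn₁⟩ := h₁ f.fst
  obtain ⟨g₂, hg₂, hn₂⟩ := h₂ f.snd
  refine ⟨WithLp.toLp 2 (g₁, g₂), ?_, ?_⟩
  · simp only [l2Coprod_apply, WithLp.toLp_fst, WithLp.toLp_snd, hg₁, hg₂]
  · simp only [WithLp.prod_norm_eq_of_L2, WithLp.toLp_fst, WithLp.toLp_snd, hn₁, hn₂]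

theorem rkhsLE_l2Coprod_iff (hL₁ : Function.Injective L₁) (hL₂ : Function.Injective L₂)
    (h : Disjoint (LinearMap.range J₁ ⊔ LinearMap.range L₁)
      (LinearMap.range J₂ ⊔ LinearMap.range L₂)) :
    RKHSle (l2Coprod J₁ J₂) (l2Coprod L₁ L₂) ↔ RKHSle J₁ L₁ ∧ RKHSle J₂ L₂ := by
  refine ⟨fun hle => ?_, fun ⟨h₁, h₂⟩ => h₁.l2Coprod h₂⟩
  have hsplit (f : WithLp 2 (H₁ × H₂)) :
      ∃ g : WithLp 2 (G₁ × G₂), L₁ g.fst = J₁ f.fst ∧ L₂ g.snd = J₂ f.snd ∧ ‖g‖ = ‖f‖ := by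
    obtain ⟨g, hgf, hg⟩ := hle f
    obtain ⟨h₁, h₂⟩ := Submodule.disjoint_iff_add_eq_zero.1 h
      (sub_mem (Submodule.mem_sup_right ⟨g.fst, rfl⟩) (Submodule.mem_sup_left ⟨f.fst, rfl⟩))
      (sub_mem (Submodule.mem_sup_right ⟨g.snd, rfl⟩) (Submodule.mem_sup_left ⟨f.snd, rfl⟩))
      (by rwa [sub_add_sub_comm, sub_eq_zero])
    exact ⟨g, sub_eq_zero.1 h₁, sub_eq_zero.1 h₂, hg⟩
  constructor
  · intro f
    obtain ⟨⟨g₁, g₂⟩, h₁, h₂, hn⟩ := hsplit (WithLp.toLp 2 (f, 0))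
    obtain rfl : g₂ = 0 := hL₂ (by simpa using h₂)
    exact ⟨g₁, h₁, by simpa using hn⟩
  · intro f
    obtain ⟨⟨g₁, g₂⟩, h₁, h₂, hn⟩ := hsplit (WithLp.toLp 2 (0, f))
    obtain rfl : g₁ = 0 := hL₁ (by simpa using h₁)
    exact ⟨g₂, h₂, by simpa using hn⟩

end DirectSum

section FeatureSpaces

variable {X Λ : Type*} [NormedAddCommGroup Λ] [InnerProductSpace ℂ Λ]

/-- A feature space of the operator-valued kernel `K`: the data of `IsVRKHS` without injectivity of
`J`, so that distinct elements of `H` may define the same function. Unlike RKHSs, feature spaces of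
two kernels always add up to one of the sum. -/
structure IsFeatureSpace (K : X → X → Λ →L[ℂ] Λ) (H : Type*) [NormedAddCommGroup H]
    [InnerProductSpace ℂ H] (J : H →ₗ[ℂ] (X → Λ)) (kf : X → Λ → H) : Prop where
  kfun_eq : ∀ (x : X) (ξ : Λ), J (kf x ξ) = fun y => K x y ξ
  repro : ∀ (f : H) (x : X) (ξ : Λ), ⟪kf x ξ, f⟫ = ⟪ξ, J f x⟫

variable {K K₁ K₂ : X → X → Λ →L[ℂ] Λ}
  {H : Type*} [NormedAddCommGroup H] [InnerProductSpace ℂ H]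
  {J : H →ₗ[ℂ] (X → Λ)} {kf : X → Λ → H}
  {H₁ : Type*} [NormedAddCommGroup H₁] [InnerProductSpace ℂ H₁]
  {J₁ : H₁ →ₗ[ℂ] (X → Λ)} {kf₁ : X → Λ → H₁}
  {H₂ : Type*} [NormedAddCommGroup H₂] [InnerProductSpace ℂ H₂]
  {J₂ : H₂ →ₗ[ℂ] (X → Λ)} {kf₂ : X → Λ → H₂}

theorem IsVRKHS.isFeatureSpace (h : IsVRKHS K H J kf) : IsFeatureSpace K H J kf :=
  ⟨h.kfun_eq, h.repro⟩

namespace IsFeatureSpace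

theorem inner_kf_kf (h : IsFeatureSpace K H J kf) (x y : X) (ξ η : Λ) :
    ⟪kf x ξ, kf y η⟫ = ⟪ξ, K y x η⟫ := by
  rw [h.repro, h.kfun_eq]

theorem add (h₁ : IsFeatureSpace K₁ H₁ J₁ kf₁) (h₂ : IsFeatureSpace K₂ H₂ J₂ kf₂) :
    IsFeatureSpace (K₁ + K₂) (WithLp 2 (H₁ × H₂)) (l2Coprod J₁ J₂)
      (fun x ξ => WithLp.toLp 2 (kf₁ x ξ, kf₂ x ξ)) where
  kfun_eq x ξ := by
    change J₁ (kf₁ x ξ) + J₂ (kf₂ x ξ) = _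
    rw [h₁.kfun_eq, h₂.kfun_eq]
    rfl
  repro f x ξ := by
    rw [WithLp.prod_inner_apply, l2Coprod_apply, Pi.add_apply, inner_add_right, ← h₁.repro,
      ← h₂.repro]
    rfl

theorem exists_eq_and_norm_le [CompleteSpace H₂] (h₁ : IsFeatureSpace K H₁ J₁ kf₁)
    (h₂ : IsFeatureSpace K H₂ J₂ kf₂) (f : H₁) : ∃ g : H₂, J₂ g = J₁ f ∧ ‖g‖ ≤ ‖f‖ := by
  obtain ⟨g, hg, hinner⟩ := exists_inner_eq_of_inner_eq (𝕜 := ℂ) (ι := X × Λ)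
    (v := fun i => kf₁ i.1 i.2) (w := fun i => kf₂ i.1 i.2)
    (fun i j => by rw [h₁.inner_kf_kf, h₂.inner_kf_kf]) f
  refine ⟨g, funext fun x => ext_inner_left ℂ fun ξ => ?_, hg⟩
  rw [← h₁.repro, ← h₂.repro]
  exact hinner (x, ξ)

end IsFeatureSpace

theorem IsVRKHS.rkhsLE [CompleteSpace H₁] [CompleteSpace H₂] (h₁ : IsVRKHS K H₁ J₁ kf₁)
    (h₂ : IsFeatureSpace K H₂ J₂ kf₂) : RKHSle J₁ J₂ := by
  intro f
  obtain ⟨g, hgf, hg⟩ := h₁.isFeatureSpace.exists_eq_and_norm_le h₂ f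
  obtain ⟨f', hf'g, hf'⟩ := h₂.exists_eq_and_norm_le h₁.isFeatureSpace g
  obtain rfl : f' = f := h₁.inj (hf'g.trans hgf)
  exact ⟨g, hgf, hg.antisymm hf'⟩

theorem IsVRKHS.add (h₁ : IsVRKHS K₁ H₁ J₁ kf₁) (h₂ : IsVRKHS K₂ H₂ J₂ kf₂)
    (h : Disjoint (LinearMap.range J₁) (LinearMap.range J₂)) :
    IsVRKHS (K₁ + K₂) (WithLp 2 (H₁ × H₂)) (l2Coprod J₁ J₂)
      (fun x ξ => WithLp.toLp 2 (kf₁ x ξ, kf₂ x ξ)) :=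
  have hadd := h₁.isFeatureSpace.add h₂.isFeatureSpace
  ⟨l2Coprod_injective h₁.inj h₂.inj h, hadd.kfun_eq, hadd.repro⟩

theorem IsVRKHS.rkhsLE_add_iff [CompleteSpace H] [CompleteSpace H₁] [CompleteSpace H₂]
    (h₁ : IsVRKHS K₁ H₁ J₁ kf₁) (h₂ : IsVRKHS K₂ H₂ J₂ kf₂) (h : IsVRKHS (K₁ + K₂) H J kf)
    {G₁ G₂ : X → X → Λ →L[ℂ] Λ}
    {HG : Type*} [NormedAddCommGroup HG] [InnerProductSpace ℂ HG] [CompleteSpace HG]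
    {L : HG →ₗ[ℂ] (X → Λ)} {kg : X → Λ → HG}
    {HG₁ : Type*} [NormedAddCommGroup HG₁] [InnerProductSpace ℂ HG₁] [CompleteSpace HG₁]
    {L₁ : HG₁ →ₗ[ℂ] (X → Λ)} {kg₁ : X → Λ → HG₁}
    {HG₂ : Type*} [NormedAddCommGroup HG₂] [InnerProductSpace ℂ HG₂] [CompleteSpace HG₂]
    {L₂ : HG₂ →ₗ[ℂ] (X → Λ)} {kg₂ : X → Λ → HG₂}
    (hG₁ : IsVRKHS G₁ HG₁ L₁ kg₁) (hG₂ : IsVRKHS G₂ HG₂ L₂ kg₂) (hG : IsVRKHS (G₁ + G₂) HG L kg)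
    (hdisj : Disjoint (LinearMap.range J₁ ⊔ LinearMap.range L₁)
      (LinearMap.range J₂ ⊔ LinearMap.range L₂)) :
    RKHSle J L ↔ RKHSle J₁ L₁ ∧ RKHSle J₂ L₂ := by
  have hJ := h₁.add h₂ (hdisj.mono le_sup_left le_sup_left)
  have hL := hG₁.add hG₂ (hdisj.mono le_sup_right le_sup_right)
  rw [← rkhsLE_l2Coprod_iff hG₁.inj hG₂.inj hdisj]
  exact ⟨fun hle => (hJ.rkhsLE h.isFeatureSpace).trans (hle.trans (hG.rkhsLE hL.isFeatureSpace)),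
    fun hle => (h.rkhsLE hJ.isFeatureSpace).trans (hle.trans (hL.rkhsLE hG.isFeatureSpace))⟩

end FeatureSpaces

section FourierKernels

variable {E : Type*} [NormedAddCommGroup E] [InnerProductSpace ℝ E] [MeasurableSpace E]
  {Λ : Type*} [NormedAddCommGroup Λ] [InnerProductSpace ℂ Λ]

/-- `K` is the translation-invariant kernel `K(x,y) = ∫ e^{i(x-y)·t} dμ(t)`, where the
operator-valued measure `μ` is given by its diagonal measures `Q ξ = ⟨ξ, μ(·)ξ⟩`. -/
def IsFourierKernel (K : E → E → Λ →L[ℂ] Λ) (Q : Λ → Measure E) : Prop :=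
  ∀ x y ξ, ⟪ξ, K x y ξ⟫ =
    ∫ t, Complex.exp (Complex.I * ((@inner ℝ _ _ (x - y) t : ℝ) : ℂ)) ∂(Q ξ)

variable {K K₁ K₂ : E → E → Λ →L[ℂ] Λ} {Q Q₁ Q₂ : Λ → Measure E}

theorem isFourierKernel_iff_inner_eq_charFun :
    IsFourierKernel K Q ↔ ∀ x y ξ, ⟪ξ, K x y ξ⟫ = charFun (Q ξ) (x - y) := by
  simp only [IsFourierKernel, charFun_apply, mul_comm Complex.I, real_inner_comm]

theorem IsFeatureSpace.inner_kf_kf_eq_charFun {H : Type*} [NormedAddCommGroup H]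
    [InnerProductSpace ℂ H] {J : H →ₗ[ℂ] (E → Λ)} {kf : E → Λ → H} (h : IsFeatureSpace K H J kf)
    (hK : IsFourierKernel K Q) (ξ : Λ) (x y : E) :
    ⟪kf x ξ, kf y ξ⟫ = charFun (Q ξ) (y - x) := by
  rw [h.inner_kf_kf, isFourierKernel_iff_inner_eq_charFun.1 hK]

variable [BorelSpace E]

theorem IsFourierKernel.add [∀ ξ, IsFiniteMeasure (Q₁ ξ)] [∀ ξ, IsFiniteMeasure (Q₂ ξ)]
    (h₁ : IsFourierKernel K₁ Q₁) (h₂ : IsFourierKernel K₂ Q₂) :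
    IsFourierKernel (K₁ + K₂) (Q₁ + Q₂) := by
  rw [isFourierKernel_iff_inner_eq_charFun] at *
  intro x y ξ
  simp only [Pi.add_apply, add_apply, inner_add_right, h₁, h₂, charFun_add_measure]

theorem IsFeatureSpace.disjoint_range [SecondCountableTopology E] [CompleteSpace E]
    [∀ ξ, IsFiniteMeasure (Q₁ ξ)] [∀ ξ, IsFiniteMeasure (Q₂ ξ)] (hsing : ∀ ξ, Q₁ ξ ⟂ₘ Q₂ ξ)
    (hK₁ : IsFourierKernel K₁ Q₁) (hK₂ : IsFourierKernel K₂ Q₂)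
    {H₁ : Type*} [NormedAddCommGroup H₁] [InnerProductSpace ℂ H₁]
    {J₁ : H₁ →ₗ[ℂ] (E → Λ)} {kf₁ : E → Λ → H₁} (h₁ : IsFeatureSpace K₁ H₁ J₁ kf₁)
    {H₂ : Type*} [NormedAddCommGroup H₂] [InnerProductSpace ℂ H₂]
    {J₂ : H₂ →ₗ[ℂ] (E → Λ)} {kf₂ : E → Λ → H₂} (h₂ : IsFeatureSpace K₂ H₂ J₂ kf₂) :
    Disjoint (LinearMap.range J₁) (LinearMap.range J₂) := by
  rw [Submodule.disjoint_def]
  rintro _ ⟨f, rfl⟩ ⟨g, hgf⟩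
  refine funext fun x => ext_inner_left ℂ fun ξ => ?_
  rw [← h₁.repro, Pi.zero_apply, inner_zero_right]
  exact inner_eq_zero_of_mutuallySingular (hsing ξ) (h₁.inner_kf_kf_eq_charFun hK₁ ξ)
    (h₂.inner_kf_kf_eq_charFun hK₂ ξ) (fun y => by rw [h₁.repro, h₂.repro, hgf]) x

end FourierKernels

theorem stmt15_general {E : Type*} [NormedAddCommGroup E] [InnerProductSpace ℝ E] [CompleteSpace E]
    [MeasurableSpace E] [BorelSpace E] [SecondCountableTopology E]
    {Λ : Type*} [NormedAddCommGroup Λ] [InnerProductSpace ℂ Λ]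
    {Qμc Qμs Qνc Qνs : Λ → Measure E}
    [∀ ξ, IsFiniteMeasure (Qμc ξ)] [∀ ξ, IsFiniteMeasure (Qμs ξ)]
    [∀ ξ, IsFiniteMeasure (Qνc ξ)] [∀ ξ, IsFiniteMeasure (Qνs ξ)]
    (hsing : ∀ ξ, (Qμc ξ + Qνc ξ) ⟂ₘ (Qμs ξ + Qνs ξ))
    {Kc Ks Gc Gs : E → E → Λ →L[ℂ] Λ}
    (hKc : IsFourierKernel Kc Qμc) (hKs : IsFourierKernel Ks Qμs)
    (hGc : IsFourierKernel Gc Qνc) (hGs : IsFourierKernel Gs Qνs)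
    {HKc : Type*} [NormedAddCommGroup HKc] [InnerProductSpace ℂ HKc] [CompleteSpace HKc]
    {JKc : HKc →ₗ[ℂ] (E → Λ)} {kfKc : E → Λ → HKc} (hHKc : IsVRKHS Kc HKc JKc kfKc)
    {HKs : Type*} [NormedAddCommGroup HKs] [InnerProductSpace ℂ HKs] [CompleteSpace HKs]
    {JKs : HKs →ₗ[ℂ] (E → Λ)} {kfKs : E → Λ → HKs} (hHKs : IsVRKHS Ks HKs JKs kfKs)
    {HK : Type*} [NormedAddCommGroup HK] [InnerProductSpace ℂ HK] [CompleteSpace HK]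
    {JK : HK →ₗ[ℂ] (E → Λ)} {kfK : E → Λ → HK} (hHK : IsVRKHS (Kc + Ks) HK JK kfK)
    {HGc : Type*} [NormedAddCommGroup HGc] [InnerProductSpace ℂ HGc] [CompleteSpace HGc]
    {JGc : HGc →ₗ[ℂ] (E → Λ)} {kfGc : E → Λ → HGc} (hHGc : IsVRKHS Gc HGc JGc kfGc)
    {HGs : Type*} [NormedAddCommGroup HGs] [InnerProductSpace ℂ HGs] [CompleteSpace HGs]
    {JGs : HGs →ₗ[ℂ] (E → Λ)} {kfGs : E → Λ → HGs} (hHGs : IsVRKHS Gs HGs JGs kfGs)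
    {HG : Type*} [NormedAddCommGroup HG] [InnerProductSpace ℂ HG] [CompleteSpace HG]
    {JG : HG →ₗ[ℂ] (E → Λ)} {kfG : E → Λ → HG} (hHG : IsVRKHS (Gc + Gs) HG JG kfG) :
    RKHSle JK JG ↔ RKHSle JKc JGc ∧ RKHSle JKs JGs := by
  have (ξ : Λ) : IsFiniteMeasure ((Qμc + Qνc) ξ) := inferInstanceAs (IsFiniteMeasure (_ + _))
  have (ξ : Λ) : IsFiniteMeasure ((Qμs + Qνs) ξ) := inferInstanceAs (IsFiniteMeasure (_ + _))
  have hdisj := IsFeatureSpace.disjoint_range hsing (hKc.add hGc) (hKs.add hGs)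
    (hHKc.isFeatureSpace.add hHGc.isFeatureSpace) (hHKs.isFeatureSpace.add hHGs.isFeatureSpace)
  rw [range_l2Coprod, range_l2Coprod] at hdisj
  exact hHKc.rkhsLE_add_iff hHKs hHK hHGc hHGs hHG hdisj

/-- For translation-invariant kernels K = K_c + K_s and G = G_c + G_s coming from
Lebesgue decompositions μ = μ_c + μ_s and ν = ν_c + ν_s (encoded weakly via diagonal measures),
H_K ⪯ H_G iff H_{K_c} ⪯ H_{G_c} and H_{K_s} ⪯ H_{G_s}. -/
theorem stmt15 {Λ : Type*} [NormedAddCommGroup Λ] [InnerProductSpace ℂ Λ] [CompleteSpace Λ]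
    (d : ℕ)
    (Qμc Qμs Qνc Qνs : Λ → Measure (EuclideanSpace ℝ (Fin d)))
    (hμcfin : ∀ ξ, IsFiniteMeasure (Qμc ξ)) (hμsfin : ∀ ξ, IsFiniteMeasure (Qμs ξ))
    (hνcfin : ∀ ξ, IsFiniteMeasure (Qνc ξ)) (hνsfin : ∀ ξ, IsFiniteMeasure (Qνs ξ))
    (hμcac : ∀ ξ, Qμc ξ ≪ volume) (hμssing : ∀ ξ, (Qμs ξ).MutuallySingular volume)
    (hνcac : ∀ ξ, Qνc ξ ≪ volume) (hνssing : ∀ ξ, (Qνs ξ).MutuallySingular volume)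
    (Kc Ks K Gc Gs G : EuclideanSpace ℝ (Fin d) → EuclideanSpace ℝ (Fin d) → Λ →L[ℂ] Λ)
    (hKc : ∀ x y ξ, ⟪ξ, Kc x y ξ⟫ =
      ∫ t, Complex.exp (Complex.I * ((@inner ℝ _ _ (x - y) t : ℝ) : ℂ)) ∂(Qμc ξ))
    (hKs : ∀ x y ξ, ⟪ξ, Ks x y ξ⟫ =
      ∫ t, Complex.exp (Complex.I * ((@inner ℝ _ _ (x - y) t : ℝ) : ℂ)) ∂(Qμs ξ))
    (hGc : ∀ x y ξ, ⟪ξ, Gc x y ξ⟫ =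
      ∫ t, Complex.exp (Complex.I * ((@inner ℝ _ _ (x - y) t : ℝ) : ℂ)) ∂(Qνc ξ))
    (hGs : ∀ x y ξ, ⟪ξ, Gs x y ξ⟫ =
      ∫ t, Complex.exp (Complex.I * ((@inner ℝ _ _ (x - y) t : ℝ) : ℂ)) ∂(Qνs ξ))
    (hK : ∀ x y, K x y = Kc x y + Ks x y) (hG : ∀ x y, G x y = Gc x y + Gs x y)
    {HKc : Type*} [NormedAddCommGroup HKc] [InnerProductSpace ℂ HKc] [CompleteSpace HKc]
    (JKc : HKc →ₗ[ℂ] (EuclideanSpace ℝ (Fin d) → Λ)) (kfKc : EuclideanSpace ℝ (Fin d) → Λ → HKc)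
    (hHKc : IsVRKHS Kc HKc JKc kfKc)
    {HKs : Type*} [NormedAddCommGroup HKs] [InnerProductSpace ℂ HKs] [CompleteSpace HKs]
    (JKs : HKs →ₗ[ℂ] (EuclideanSpace ℝ (Fin d) → Λ)) (kfKs : EuclideanSpace ℝ (Fin d) → Λ → HKs)
    (hHKs : IsVRKHS Ks HKs JKs kfKs)
    {HK : Type*} [NormedAddCommGroup HK] [InnerProductSpace ℂ HK] [CompleteSpace HK]
    (JK : HK →ₗ[ℂ] (EuclideanSpace ℝ (Fin d) → Λ)) (kfK : EuclideanSpace ℝ (Fin d) → Λ → HK)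
    (hHK : IsVRKHS K HK JK kfK)
    {HGc : Type*} [NormedAddCommGroup HGc] [InnerProductSpace ℂ HGc] [CompleteSpace HGc]
    (JGc : HGc →ₗ[ℂ] (EuclideanSpace ℝ (Fin d) → Λ)) (kfGc : EuclideanSpace ℝ (Fin d) → Λ → HGc)
    (hHGc : IsVRKHS Gc HGc JGc kfGc)
    {HGs : Type*} [NormedAddCommGroup HGs] [InnerProductSpace ℂ HGs] [CompleteSpace HGs]
    (JGs : HGs →ₗ[ℂ] (EuclideanSpace ℝ (Fin d) → Λ)) (kfGs : EuclideanSpace ℝ (Fin d) → Λ → HGs)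
    (hHGs : IsVRKHS Gs HGs JGs kfGs)
    {HG : Type*} [NormedAddCommGroup HG] [InnerProductSpace ℂ HG] [CompleteSpace HG]
    (JG : HG →ₗ[ℂ] (EuclideanSpace ℝ (Fin d) → Λ)) (kfG : EuclideanSpace ℝ (Fin d) → Λ → HG)
    (hHG : IsVRKHS G HG JG kfG) :
    RKHSle JK JG ↔ RKHSle JKc JGc ∧ RKHSle JKs JGs := by
  obtain ⟨rfl, rfl⟩ : K = Kc + Ks ∧ G = Gc + Gs := ⟨funext₂ hK, funext₂ hG⟩
  exact stmt15_general (fun ξ => (((hμssing ξ).add_left (hνssing ξ)).mono_ac .rfl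
    ((hμcac ξ).add_left (hνcac ξ))).symm) hKc hKs hGc hGs hHKc hHKs hHK hHGc hHGs hHG
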